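/- Let γ ∈ SL(2,ℤ) and k ≥ 1, and suppose tr(γ) ≠ 2, tr(γ) ≠ -2, and γ^k ≠ 1. Then k · c_k(γ) = ∑_{d ∣ k} φ(k/d) · |tr(γ^d) - 2|, where φ is Euler's totient function and the sum is over positive divisors d of k. -/

import Mathlib

/-- `Q_k(γ) = coker(1 - γ^k)`, the cokernel of `1 - γ^k` acting on `Fin 2 → ℤ`. -/
abbrev Qk (γ : Matrix.SpecialLinearGroup (Fin 2) ℤ) (k : ℕ) :=
  (Fin 2 → ℤ) ⧸ LinearMap.range (Matrix.toLin'
    (1 - ((γ ^ k : Matrix.SpecialLinearGroup (Fin 2) ℤ) : Matrix (Fin 2) (Fin 2) ℤ)))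

/-!
If `f` is an endomorphism of a free `ℤ`-module `M` of finite rank and `det (1 - f ^ k) ≠ 0`, the
cokernel of `1 - f ^ k` is finite, hence all torsion, and `f` induces on it a map `g` with
`g ^ k = 1`. By Burnside's lemma for the action of `ℤ/k`, the number of orbits of `g` is the average
over `j < k` of the number of fixed points of `g ^ j`, which depends only on `d = gcd k j`; each
`d ∣ k` arises from `φ (k / d)` values of `j`. In a finite group the kernel and the cokernel of
`1 - g ^ d` have the same size. Since `1 - f ^ d` divides `1 - f ^ k`, the latter is the cokernel of
`1 - f ^ d` on `M`, which has `|det (1 - f ^ d)|` elements.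

For `γ ∈ SL(2, ℤ)` one has `det (1 - γ ^ d) = 2 - tr (γ ^ d)`. If `tr (γ ^ k) = 2` and `γ ^ k ≠ 1`,
then `γ ^ k` is parabolic, so `γ` is parabolic too, i.e. `tr γ = ±2`.
-/

open Function (IsFixedPt IsPeriodicPt Semiconj Surjective fixedPoints mem_fixedPoints)
open LinearMap (ker range)
open Module (End)

theorem sum_range_gcd_eq_sum_divisors {A : Type*} [AddCommMonoid A] (k : ℕ) (F : ℕ → A) :
    ∑ j ∈ Finset.range k, F (k.gcd j) = ∑ d ∈ k.divisors, (k / d).totient • F d := by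
  have hmaps : ∀ j ∈ Finset.range k, k.gcd j ∈ k.divisors := fun j hj =>
    Nat.mem_divisors.2 ⟨k.gcd_dvd_left j, Nat.ne_zero_of_lt (Finset.mem_range.1 hj)⟩
  rw [← Finset.sum_fiberwise_of_maps_to hmaps]
  refine Finset.sum_congr rfl fun d hd => ?_
  rw [Nat.totient_div_of_dvd (Nat.dvd_of_mem_divisors hd), ← Finset.sum_const]
  exact Finset.sum_congr rfl fun j hj => congrArg F (Finset.mem_filter.1 hj).2

section Iterate

variable {X : Type*} {f : X → X} {k : ℕ}

/-- The quotient of `X` by the equivalence relation generated by `x ~ f^[j] x`. When every point is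
periodic these are the orbits of the cyclic group generated by `f`. -/
abbrev IterateOrbits (f : X → X) : Type _ :=
  Quot fun x y : X => ∃ j : ℕ, f^[j] x = y

/-- The action of `ℤ/k` generated by a map `f` whose `k`-th iterate is the identity, to which
Burnside's lemma is applied. The class `m` acts through its representative `m.val < k`. -/
abbrev iterateAddAction [NeZero k] (hf : ∀ x, IsPeriodicPt f k x) : AddAction (ZMod k) X where
  vadd m x := f^[m.val] x
  zero_vadd x := congrArg (f^[·] x) ZMod.val_zero
  add_vadd m n x := by
    change f^[(m + n).val] x = f^[m.val] (f^[n.val] x)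
    rw [ZMod.val_add, (hf x).iterate_mod_apply, Function.iterate_add_apply]

theorem exists_iterate_eq_iff_orbitRel [NeZero k] (hf : ∀ x, IsPeriodicPt f k x) (x y : X) :
    (∃ j : ℕ, f^[j] x = y) ↔
      letI := iterateAddAction hf
      AddAction.orbitRel (ZMod k) X x y := by
  let := iterateAddAction hf
  refine Iff.trans ?_ (Setoid.comm' _)
  constructor
  · rintro ⟨j, rfl⟩
    refine ⟨(j : ZMod k), ?_⟩
    change f^[(j : ZMod k).val] x = f^[j] x
    rw [ZMod.val_natCast, (hf x).iterate_mod_apply]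
  · rintro ⟨m, hm⟩
    exact ⟨m.val, hm⟩

theorem mul_card_iterateOrbits_eq_sum_range [Finite X] (hf : ∀ x, IsPeriodicPt f k x) :
    k * Nat.card (IterateOrbits f) = ∑ j ∈ Finset.range k, Nat.card (fixedPoints f^[j]) := by
  classical
  rcases k with _ | n
  · simp only [zero_mul, Finset.range_zero, Finset.sum_empty]
  have := Fintype.ofFinite X
  let := iterateAddAction hf
  have horbits : Nat.card (IterateOrbits f) =
      Fintype.card (AddAction.orbitRel.Quotient (ZMod (n + 1)) X) := by
    rw [← Nat.card_eq_fintype_card]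
    exact Nat.card_congr (Quot.congrRight (exists_iterate_eq_iff_orbitRel hf))
  have hburnside := AddAction.sum_card_fixedBy_eq_card_orbits_mul_card_addGroup (ZMod (n + 1)) X
  rw [ZMod.card] at hburnside
  rw [horbits, mul_comm, ← hburnside, Finset.sum_range]
  refine Finset.sum_congr rfl fun m _ => ?_
  rw [← Nat.card_eq_fintype_card]
  rfl

theorem fixedPoints_iterate_gcd (hf : ∀ x, IsPeriodicPt f k x) (j : ℕ) :
    fixedPoints f^[k.gcd j] = fixedPoints f^[j] :=
  Set.ext fun x =>
    ⟨fun h => IsPeriodicPt.trans_dvd (f := f) h (k.gcd_dvd_right j), fun h => (hf x).gcd h⟩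

theorem mul_card_iterateOrbits_eq_sum_divisors [Finite X] (hf : ∀ x, IsPeriodicPt f k x) :
    k * Nat.card (IterateOrbits f) =
      ∑ d ∈ k.divisors, (k / d).totient * Nat.card (fixedPoints f^[d]) := by
  rw [mul_card_iterateOrbits_eq_sum_range hf]
  simpa only [fixedPoints_iterate_gcd hf, smul_eq_mul] using
    sum_range_gcd_eq_sum_divisors k fun d => Nat.card (fixedPoints f^[d])

end Iterate

theorem one_sub_pow_dvd_one_sub_pow {A : Type*} [Ring A] (a : A) {d k : ℕ} (hd : d ∣ k) :
    1 - a ^ d ∣ 1 - a ^ k := by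
  obtain ⟨c, rfl⟩ := hd
  rw [pow_mul]
  exact one_sub_dvd_one_sub_pow (a ^ d) c

section Cokernel

variable {R M Q : Type*} [Ring R] [AddCommGroup M] [Module R M] [AddCommGroup Q] [Module R Q]

theorem natCard_ker_eq_natCard_quotient_range [Finite M] (f : End R M) :
    Nat.card (ker f) = Nat.card (M ⧸ range f) := by
  have hrange : Nat.card (M ⧸ ker f) = Nat.card (range f) :=
    Nat.card_congr f.quotKerEquivRange.toEquiv
  have hmul := (Submodule.card_eq_card_quotient_mul_card (ker f)).symm.trans
    (Submodule.card_eq_card_quotient_mul_card (range f))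
  rw [hrange, mul_comm] at hmul
  exact Nat.eq_of_mul_eq_mul_left Nat.card_pos hmul

variable {f : End R M} {g : End R Q} {π : M →ₗ[R] Q} {d k : ℕ}

theorem pow_comp_eq_comp_pow (hg : ∀ v, g (π v) = π (f v)) (j : ℕ) :
    (g ^ j) ∘ₗ π = π ∘ₗ (f ^ j) := by
  ext v
  simp only [LinearMap.comp_apply, End.pow_apply]
  exact ((Semiconj.iterate_right (fun v => (hg v).symm) j).eq v).symm

theorem ker_mkQ_comp_eq_range_one_sub_pow (hπ : Surjective π) (hker : ker π = range (1 - f ^ k))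
    (hg : ∀ v, g (π v) = π (f v)) (hd : d ∣ k) :
    ker ((range (1 - g ^ d)).mkQ ∘ₗ π) = range (1 - f ^ d) := by
  have hcomm : (1 - g ^ d) ∘ₗ π = π ∘ₗ (1 - f ^ d) := by
    rw [LinearMap.sub_comp, LinearMap.comp_sub, pow_comp_eq_comp_pow hg, End.one_eq_id,
      End.one_eq_id, LinearMap.id_comp, LinearMap.comp_id]
  have hrange : range (1 - g ^ d) = (range (1 - f ^ d)).map π := by
    rw [← LinearMap.range_comp, ← hcomm,
      LinearMap.range_comp_of_range_eq_top _ (LinearMap.range_eq_top.2 hπ)]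
  have hle : ker π ≤ range (1 - f ^ d) := by
    obtain ⟨h, hfac⟩ := one_sub_pow_dvd_one_sub_pow f hd
    rw [hker, hfac]
    exact LinearMap.range_comp_le_range h (1 - f ^ d)
  rw [LinearMap.ker_comp, Submodule.ker_mkQ, hrange, Submodule.comap_map_eq_self hle]

theorem isPeriodicPt_of_ker_eq_range_one_sub_pow (hπ : Surjective π)
    (hker : ker π = range (1 - f ^ k)) (hg : ∀ v, g (π v) = π (f v)) (x : Q) :
    IsPeriodicPt g k x := by
  obtain ⟨v, rfl⟩ := hπ x
  have hmem : (1 - f ^ k) v ∈ ker π := hker ▸ LinearMap.mem_range_self _ v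
  rw [LinearMap.mem_ker, LinearMap.sub_apply, map_sub, sub_eq_zero, End.one_apply] at hmem
  change g^[k] (π v) = π v
  rw [← End.pow_apply, ← LinearMap.comp_apply, pow_comp_eq_comp_pow hg,
    LinearMap.comp_apply, ← hmem]

theorem natCard_fixedPoints_iterate_eq_natCard_quotient_range [Finite Q] (hπ : Surjective π)
    (hker : ker π = range (1 - f ^ k)) (hg : ∀ v, g (π v) = π (f v)) (hd : d ∣ k) :
    Nat.card (fixedPoints g^[d]) = Nat.card (M ⧸ range (1 - f ^ d)) := by
  have hfixed : Nat.card (fixedPoints g^[d]) = Nat.card (ker (1 - g ^ d)) := by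
    refine Nat.card_congr (Equiv.subtypeEquivRight fun x => ?_)
    rw [mem_fixedPoints, IsFixedPt, LinearMap.mem_ker, LinearMap.sub_apply, End.one_apply,
      End.pow_apply, sub_eq_zero, eq_comm]
  rw [hfixed, natCard_ker_eq_natCard_quotient_range,
    ← ker_mkQ_comp_eq_range_one_sub_pow hπ hker hg hd]
  exact (Nat.card_congr (LinearMap.quotKerEquivOfSurjective ((range (1 - g ^ d)).mkQ ∘ₗ π)
    ((Submodule.mkQ_surjective _).comp hπ)).toEquiv).symm

end Cokernel

theorem torsion_int_eq_top_of_finite (Q : Type*) [AddCommGroup Q] [Finite Q] :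
    Submodule.torsion ℤ Q = ⊤ :=
  Submodule.toAddSubgroup_injective <|
    Submodule.torsion_int.trans (AddCommGroup.torsion_eq_top_iff.2 isAddTorsion_of_finite)

section Determinant

variable {M : Type*} [AddCommGroup M] [Module.Free ℤ M] [Module.Finite ℤ M]

theorem natCard_quotient_range_eq_natAbs_det {f : End ℤ M} (hf : LinearMap.det f ≠ 0) :
    Nat.card (M ⧸ range f) = (LinearMap.det f).natAbs := by
  have hker : ker f = ⊥ := not_not.1 (mt LinearMap.det_eq_zero_iff_ker_ne_bot.2 hf)
  exact (Submodule.natAbs_det_equiv _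
    (LinearEquiv.ofInjective f (LinearMap.ker_eq_bot.1 hker))).symm

theorem finite_quotient_range_of_det_ne_zero {f : End ℤ M} (hf : LinearMap.det f ≠ 0) :
    Finite (M ⧸ range f) :=
  Nat.finite_of_card_ne_zero <| by
    rwa [natCard_quotient_range_eq_natAbs_det hf, Int.natAbs_ne_zero]

theorem stmt8_general {Q : Type*} [AddCommGroup Q] (f : End ℤ M) (k : ℕ)
    (hdet : LinearMap.det (1 - f ^ k) ≠ 0) (π : M →ₗ[ℤ] Q) (hπ : Surjective π)
    (hker : ker π = range (1 - f ^ k)) (g : End ℤ Q) (hg : ∀ v, g (π v) = π (f v)) :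
    k * Nat.card (Quot fun x y : Submodule.torsion ℤ Q => ∃ j : ℕ, (g ^ j) (x : Q) = (y : Q)) =
      ∑ d ∈ k.divisors, (k / d).totient * (LinearMap.det (1 - f ^ d)).natAbs := by
  have hfin : Finite (M ⧸ ker π) := hker ▸ finite_quotient_range_of_det_ne_zero hdet
  have : Finite Q := Finite.of_equiv _ (π.quotKerEquivOfSurjective hπ).toEquiv
  have htorsion : ∀ x : Q, x ∈ Submodule.torsion ℤ Q := fun x =>
    torsion_int_eq_top_of_finite Q ▸ Submodule.mem_top
  have horbits : Nat.card (Quot fun x y : Submodule.torsion ℤ Q =>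
      ∃ j : ℕ, (g ^ j) (x : Q) = (y : Q)) = Nat.card (IterateOrbits g) := by
    refine Nat.card_congr (Quot.congr (Equiv.subtypeUnivEquiv htorsion) fun x y => ?_)
    simp only [End.pow_apply]
    rfl
  rw [horbits, mul_card_iterateOrbits_eq_sum_divisors
    (isPeriodicPt_of_ker_eq_range_one_sub_pow hπ hker hg)]
  refine Finset.sum_congr rfl fun d hd => ?_
  have hdk : d ∣ k := Nat.dvd_of_mem_divisors hd
  have hdvd : LinearMap.det (1 - f ^ d) ∣ LinearMap.det (1 - f ^ k) :=
    map_dvd LinearMap.det (one_sub_pow_dvd_one_sub_pow f hdk)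
  rw [natCard_fixedPoints_iterate_eq_natCard_quotient_range hπ hker hg hdk,
    natCard_quotient_range_eq_natAbs_det (ne_zero_of_dvd_ne_zero hdet hdvd)]

end Determinant

section FinTwo

open Matrix

variable {R : Type*} [CommRing R]

theorem det_one_sub_fin_two (A : Matrix (Fin 2) (Fin 2) R) :
    (1 - A).det = 1 - A.trace + A.det := by
  simp only [det_fin_two, trace_fin_two, Matrix.sub_apply, one_apply_eq, ne_eq, zero_ne_one,
    one_ne_zero, not_false_eq_true, one_apply_ne]
  ring

theorem exists_pow_eq_smul_add_scalar (A : Matrix (Fin 2) (Fin 2) R) (k : ℕ) :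
    ∃ a b : R, A ^ k = a • A + scalar (Fin 2) b := by
  nontriviality R
  have hdeg : (Polynomial.X ^ k %ₘ A.charpoly).natDegree ≤ 1 := by
    have := Polynomial.natDegree_modByMonic_lt (Polynomial.X ^ k) A.charpoly_monic
      (fun h => by simpa [h] using A.charpoly_natDegree_eq_dim)
    rw [A.charpoly_natDegree_eq_dim, Fintype.card_fin] at this
    omega
  obtain ⟨a, b, hab⟩ := Polynomial.exists_eq_X_add_C_of_natDegree_le_one hdeg
  refine ⟨a, b, ?_⟩
  rw [Matrix.pow_eq_aeval_mod_charpoly, hab]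
  simp only [map_add, map_mul, Polynomial.aeval_C, Polynomial.aeval_X, ← Algebra.smul_def]
  rfl

theorem discr_smul_add_scalar (A : Matrix (Fin 2) (Fin 2) R) (a b : R) :
    (a • A + scalar (Fin 2) b).discr = a ^ 2 * A.discr := by
  simp only [discr_fin_two, trace_fin_two, det_fin_two, scalar_apply, Matrix.add_apply,
    Matrix.smul_apply, smul_eq_mul, diagonal_apply_eq, ne_eq, zero_ne_one, one_ne_zero,
    not_false_eq_true, diagonal_apply_ne, add_zero]
  ring

theorem isParabolic_of_isParabolic_pow [IsDomain R] {A : Matrix (Fin 2) (Fin 2) R} {k : ℕ}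
    (h : (A ^ k).IsParabolic) : A.IsParabolic := by
  obtain ⟨hscalar, hdiscr⟩ := h
  obtain ⟨a, b, hab⟩ := exists_pow_eq_smul_add_scalar A k
  refine ⟨?_, ?_⟩
  · rintro ⟨c, rfl⟩
    exact hscalar ⟨c ^ k, map_pow _ c k⟩
  · have ha : a ≠ 0 := by
      rintro rfl
      exact hscalar ⟨b, by rw [hab, zero_smul, zero_add]⟩
    rw [hab, discr_smul_add_scalar] at hdiscr
    exact (mul_eq_zero.1 hdiscr).resolve_left (pow_ne_zero 2 ha)

theorem isParabolic_of_trace_eq_two [IsDomain R] [NeZero (2 : R)]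
    {γ : SpecialLinearGroup (Fin 2) R} (htr : (γ : Matrix (Fin 2) (Fin 2) R).trace = 2)
    (hγ : γ ≠ 1) : (γ : Matrix (Fin 2) (Fin 2) R).IsParabolic := by
  refine ⟨?_, ?_⟩
  · rintro ⟨c, hc⟩
    have hc1 : c = 1 := by
      rw [← hc, trace_fin_two] at htr
      simp only [scalar_apply, diagonal_apply_eq] at htr
      apply mul_left_cancel₀ (NeZero.ne (2 : R))
      linear_combination htr
    refine hγ (Subtype.ext ?_)
    rw [← hc, hc1, map_one, Matrix.SpecialLinearGroup.coe_one]
  · rw [discr_fin_two, htr, γ.det_coe]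
    norm_num

theorem trace_pow_ne_two [IsDomain R] [NeZero (2 : R)] {γ : SpecialLinearGroup (Fin 2) R} {k : ℕ}
    (htr : (γ : Matrix (Fin 2) (Fin 2) R).trace ≠ 2)
    (htr' : (γ : Matrix (Fin 2) (Fin 2) R).trace ≠ -2) (hγk : γ ^ k ≠ 1) :
    ((γ ^ k : SpecialLinearGroup (Fin 2) R) : Matrix (Fin 2) (Fin 2) R).trace ≠ 2 := by
  intro h
  have hparabolic := isParabolic_of_trace_eq_two h hγk
  rw [Matrix.SpecialLinearGroup.coe_pow] at hparabolic
  have hdiscr := (isParabolic_of_isParabolic_pow hparabolic).2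
  rw [discr_fin_two, γ.det_coe] at hdiscr
  have hfactor : ((γ : Matrix (Fin 2) (Fin 2) R).trace - 2) *
      ((γ : Matrix (Fin 2) (Fin 2) R).trace + 2) = 0 := by
    linear_combination hdiscr
  exact (mul_eq_zero.1 hfactor).elim (fun hsub => htr (sub_eq_zero.1 hsub))
    fun hadd => htr' (eq_neg_of_add_eq_zero_left hadd)

theorem toLin'_one_sub_pow {n : Type*} [Fintype n] [DecidableEq n] (A : Matrix n n R) (k : ℕ) :
    toLin' (1 - A ^ k) = 1 - toLin' A ^ k := by
  rw [map_sub, toLin'_one, toLin'_pow, End.one_eq_id]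

theorem det_one_sub_toLin'_pow (γ : SpecialLinearGroup (Fin 2) R) (k : ℕ) :
    LinearMap.det (1 - toLin' (γ : Matrix (Fin 2) (Fin 2) R) ^ k) =
      -(((γ ^ k : SpecialLinearGroup (Fin 2) R) : Matrix (Fin 2) (Fin 2) R).trace - 2) := by
  rw [← toLin'_one_sub_pow, ← Matrix.SpecialLinearGroup.coe_pow, LinearMap.det_toLin',
    det_one_sub_fin_two, (γ ^ k).det_coe]
  ring

theorem det_one_sub_toLin'_pow_ne_zero [IsDomain R] [NeZero (2 : R)]
    {γ : SpecialLinearGroup (Fin 2) R} {k : ℕ}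
    (htr : (γ : Matrix (Fin 2) (Fin 2) R).trace ≠ 2)
    (htr' : (γ : Matrix (Fin 2) (Fin 2) R).trace ≠ -2) (hγk : γ ^ k ≠ 1) :
    LinearMap.det (1 - toLin' (γ : Matrix (Fin 2) (Fin 2) R) ^ k) ≠ 0 := by
  rw [det_one_sub_toLin'_pow]
  exact neg_ne_zero.2 (sub_ne_zero.2 (trace_pow_ne_two htr htr' hγk))

end FinTwo

/-- if `tr(γ) ≠ ±2` and `γ^k ≠ 1`, then `k · c_k(γ) = ∑_{d ∣ k} φ(k/d) ·
|tr(γ^d) - 2|`, where `c_k(γ)` is the number of orbits of the cyclic group generated by the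
endomorphism `g` of `Q_k(γ)` induced by multiplication by `γ`, acting on the torsion
submodule of `Q_k(γ)`. -/
theorem stmt8 (γ : Matrix.SpecialLinearGroup (Fin 2) ℤ) (k : ℕ) (hk : 1 ≤ k)
    (htr : Matrix.trace ((γ : Matrix (Fin 2) (Fin 2) ℤ)) ≠ 2)
    (htr' : Matrix.trace ((γ : Matrix (Fin 2) (Fin 2) ℤ)) ≠ -2)
    (hγk : γ ^ k ≠ 1)
    (g : Module.End ℤ (Qk γ k))
    (hg : ∀ v : Fin 2 → ℤ, g (Submodule.Quotient.mk v) =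
      Submodule.Quotient.mk (Matrix.mulVec ((γ : Matrix (Fin 2) (Fin 2) ℤ)) v)) :
    k * Nat.card (Quot fun x y : Submodule.torsion ℤ (Qk γ k) =>
        ∃ j : ℕ, (g ^ j) (x : Qk γ k) = (y : Qk γ k)) =
      ∑ d ∈ Nat.divisors k, Nat.totient (k / d) *
        (Matrix.trace ((γ ^ d : Matrix.SpecialLinearGroup (Fin 2) ℤ) :
          Matrix (Fin 2) (Fin 2) ℤ) - 2).natAbs := by
  simpa only [det_one_sub_toLin'_pow, Int.natAbs_neg] using
    stmt8_general _ k (det_one_sub_toLin'_pow_ne_zero htr htr' hγk)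
      (Submodule.mkQ _ : (Fin 2 → ℤ) →ₗ[ℤ] Qk γ k) (Submodule.mkQ_surjective _)
      ((Submodule.ker_mkQ _).trans (congrArg range (toLin'_one_sub_pow _ k))) g hg
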